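/- Let q be a prime power, k ≥ 1, and n = 2k+1. Let B = B_0 ∪ B_{n-1} be a blocking set with respect to k-spaces in PG(2k+1,q) consisting of points and hyperplanes with |B| = (q+1)·q^k. Then no point P not in B_0 lies simultaneously on a tangent line to B_0 and on a secant line to B_0. -/

import Mathlib

/-!
Work in vector-space dimension `k + m + 2` and project the blocking set from a subspace `S` of
dimension `k` without points of `B₀`: in the quotient geometry points and hyperplanes block all
points, so counting vectors gives `q ^ m * (q + 1) ≤ |B₀ / S| + q ^ m * |{H ∈ Bₙ | S ≤ H}|`, where
`B₀ / S` is the projected point set. If `W` is a `k`-space blocked by a single point `R` of `B₀` and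
by nothing else, sum this over the `q ^ k` complements `S` of `R` in `W`. A hyperplane `H` contains
at most one of them, namely `H ∩ W`, and none if `R ∈ H`, whence
`q ^ (k + m) * (q + 1) ≤ q ^ k * |B₀| + q ^ m * |Bₙ|`.

In the case of equality every projection from such an `S` is injective on `B₀`. A tangent line
through `P` extends to such a `W`, by the same bound in the quotient by the line, and then `S` can
be taken through `P`. Since the points of a secant line through `P` have the same image under
the projection from `S`, such a line does not exist.
-/

section PointHyperplaneBlockingSets

open Module Finset
open scoped Classical

variable {F : Type*} [Field F] {V : Type*} [AddCommGroup V] [Module F V]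

local notation "q" => Fintype.card F

/-! ### Quotients and relative complements -/

theorem finrank_sup_of_finrank_eq_one [FiniteDimensional F V] {S p : Submodule F V}
    (hp : finrank F p = 1) (hpS : ¬ p ≤ S) : finrank F ↥(S ⊔ p) = finrank F S + 1 := by
  have hdisj : S ⊓ p = ⊥ :=
    ((Submodule.isAtom_iff_finrank_eq_one.mpr hp).not_le_iff_disjoint.mp hpS).symm.eq_bot
  have h := Submodule.finrank_sup_add_finrank_inf_eq S p
  rwa [hdisj, finrank_bot, add_zero, hp] at h

theorem finrank_comap_mkQ [FiniteDimensional F V] (S : Submodule F V) (U : Submodule F (V ⧸ S)) :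
    finrank F (U.comap S.mkQ) = finrank F U + finrank F S := by
  have h := LinearMap.finrank_range_add_finrank_ker (S.mkQ.domRestrict (U.comap S.mkQ))
  have hle : S ≤ U.comap S.mkQ := by simpa using LinearMap.ker_le_comap (f := S.mkQ) (p := U)
  rw [LinearMap.range_domRestrict, LinearMap.ker_domRestrict, Submodule.ker_mkQ,
    Submodule.map_comap_eq_of_surjective S.mkQ_surjective,
    (Submodule.comapSubtypeEquivOfLe hle).finrank_eq] at h
  exact h.symm

theorem finrank_map_mkQ_add [FiniteDimensional F V] (S U : Submodule F V) :
    finrank F (U.map S.mkQ) + finrank F S = finrank F ↥(S ⊔ U) := by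
  rw [← finrank_comap_mkQ, Submodule.comap_map_mkQ]

/-- The complements of `R` in the interval `[⊥, W]`, that is, the subspaces `S` of `W` such that
`W = R ⊕ S`. -/
noncomputable def relComplements [Finite V] (R W : Submodule F V) : Finset (Submodule F V) :=
  (Set.toFinite {S | Disjoint R S ∧ R ⊔ S = W}).toFinset

theorem mem_relComplements [Finite V] {R W S : Submodule F V} :
    S ∈ relComplements R W ↔ Disjoint R S ∧ R ⊔ S = W := by
  simp [relComplements]

theorem exists_mem_relComplements_ge [Finite V] {R W P : Submodule F V} (hRW : R ≤ W)
    (hPW : P ≤ W) (h : Disjoint P R) : ∃ S ∈ relComplements R W, P ≤ S := by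
  have hdisj : Disjoint (⟨P, hPW⟩ : Set.Iic W) ⟨R, hRW⟩ := Set.Iic.disjoint_iff.mpr h
  obtain ⟨S, hPS, hS⟩ := hdisj.exists_isCompl
  exact ⟨S, mem_relComplements.mpr (Set.Iic.isCompl_iff.mp hS.symm), hPS⟩

/-! ### Blocking sets and their projections -/

/-- `B₀` is a set of points and `Bₙ` a set of hyperplanes of the projective space of `V` such that
every `k`-space, that is, every linear subspace of dimension `k + 1`, contains a point of `B₀` or
lies in a hyperplane of `Bₙ`. Points are encoded as one-dimensional linear subspaces. -/
structure IsBlockingSet (k : ℕ) (B₀ Bₙ : Finset (Submodule F V)) : Prop where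
  finrank_point : ∀ p ∈ B₀, finrank F p = 1
  finrank_hyperplane : ∀ H ∈ Bₙ, finrank F H + 1 = finrank F V
  exists_le_or_exists_ge : ∀ W : Submodule F V, finrank F W = k + 1 →
    (∃ p ∈ B₀, p ≤ W) ∨ ∃ H ∈ Bₙ, W ≤ H

variable {k m : ℕ} {B₀ Bₙ : Finset (Submodule F V)}

/-- The projection from the centre `S` of a set of subspaces of `V`, such as points not in `S` or
hyperplanes through `S`, to the quotient geometry of `S`. -/
noncomputable def projectFrom (S : Submodule F V) (B : Finset (Submodule F V)) :
    Finset (Submodule F (V ⧸ S)) :=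
  B.image (Submodule.map S.mkQ)

theorem isBlockingSet_projectFrom [FiniteDimensional F V] {S : Submodule F V}
    (h₀ : ∀ p ∈ B₀, finrank F p = 1 ∧ ¬ p ≤ S)
    (hₙ : ∀ H ∈ Bₙ, finrank F H + 1 = finrank F V ∧ S ≤ H)
    (hblock : ∀ W, S ≤ W → finrank F W = k + 1 + finrank F S →
      (∃ p ∈ B₀, p ≤ W) ∨ ∃ H ∈ Bₙ, W ≤ H) :
    IsBlockingSet k (projectFrom S B₀) (projectFrom S Bₙ) where
  finrank_point := forall_mem_image.mpr fun p hp => by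
    have h := finrank_map_mkQ_add S p
    rw [finrank_sup_of_finrank_eq_one (h₀ p hp).1 (h₀ p hp).2] at h
    omega
  finrank_hyperplane := forall_mem_image.mpr fun H hH => by
    have h := finrank_map_mkQ_add S H
    have hV := S.finrank_quotient_add_finrank
    rw [sup_eq_right.mpr (hₙ H hH).2] at h
    have := (hₙ H hH).1
    omega
  exists_le_or_exists_ge U hU := by
    have hle : S ≤ U.comap S.mkQ := by simpa using LinearMap.ker_le_comap (f := S.mkQ) (p := U)
    have hfin : finrank F (U.comap S.mkQ) = k + 1 + finrank F S := by rw [finrank_comap_mkQ, hU]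
    refine (hblock _ hle hfin).imp ?_ ?_
    · rintro ⟨p, hp, hpU⟩
      exact ⟨p.map S.mkQ, mem_image_of_mem _ hp, Submodule.map_le_iff_le_comap.mpr hpU⟩
    · rintro ⟨H, hH, hUH⟩
      refine ⟨H.map S.mkQ, mem_image_of_mem _ hH, ?_⟩
      rw [← Submodule.map_comap_eq_of_surjective S.mkQ_surjective U]
      exact Submodule.map_mono hUH

theorem IsBlockingSet.project [FiniteDimensional F V] {S : Submodule F V}
    (hB : IsBlockingSet (k + finrank F S) B₀ Bₙ) (hS : ∀ p ∈ B₀, ¬ p ≤ S) :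
    IsBlockingSet k (projectFrom S B₀) (projectFrom S {H ∈ Bₙ | S ≤ H}) := by
  refine isBlockingSet_projectFrom (fun p hp => ⟨hB.finrank_point p hp, hS p hp⟩)
    (fun H hH => ?_) fun W hSW hW => ?_
  · rw [mem_filter] at hH
    exact ⟨hB.finrank_hyperplane H hH.1, hH.2⟩
  · refine (hB.exists_le_or_exists_ge W (by omega)).imp_right ?_
    rintro ⟨H, hH, hWH⟩
    exact ⟨H, mem_filter.mpr ⟨hH, hSW.trans hWH⟩, hWH⟩

/-- The `k`-space `W` contains the point `R` of `B₀` and is blocked by no other point of `B₀` and by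
no hyperplane of `Bₙ`, so that it witnesses that `R` is essential in a blocking set. -/
structure BlockedOnlyBy (k : ℕ) (B₀ Bₙ : Finset (Submodule F V)) (R W : Submodule F V) :
    Prop where
  finrank_eq : finrank F W = k + 1
  mem : R ∈ B₀
  le : R ≤ W
  eq_of_le : ∀ p ∈ B₀, p ≤ W → p = R
  not_le : ∀ H ∈ Bₙ, ¬ W ≤ H

variable {R W S : Submodule F V}

theorem IsBlockingSet.exists_blockedOnlyBy (hB : IsBlockingSet k B₀ Bₙ) (hR : R ∈ B₀)
    (hessential : ¬ IsBlockingSet k (B₀.erase R) Bₙ) : ∃ W, BlockedOnlyBy k B₀ Bₙ R W := by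
  by_contra! hnone
  refine hessential ⟨fun p hp => hB.finrank_point p (mem_of_mem_erase hp), hB.finrank_hyperplane,
    fun W hW => ?_⟩
  by_contra! hfree
  have heq : ∀ p ∈ B₀, p ≤ W → p = R := fun p hp hpW => by
    by_contra hpR
    exact hfree.1 p (mem_erase.mpr ⟨hpR, hp⟩) hpW
  rcases hB.exists_le_or_exists_ge W hW with ⟨p, hp, hpW⟩ | ⟨H, hH, hWH⟩
  · exact hnone W ⟨hW, hR, heq p hp hpW ▸ hpW, heq, hfree.2⟩
  · exact hfree.2 H hH hWH

theorem BlockedOnlyBy.not_le_of_mem_relComplements [Finite V] (hW : BlockedOnlyBy k B₀ Bₙ R W)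
    (hR : finrank F R = 1) (hS : S ∈ relComplements R W) : ∀ p ∈ B₀, ¬ p ≤ S := by
  intro p hp hpS
  obtain ⟨hdisj, hsup⟩ := mem_relComplements.mp hS
  have hpR : p = R := hW.eq_of_le p hp (hpS.trans (hsup ▸ le_sup_right))
  have hbot : R = ⊥ := hdisj.eq_bot_of_le (hpR ▸ hpS)
  rw [hbot, finrank_bot] at hR
  exact zero_ne_one hR

theorem finrank_add_one_of_mem_relComplements [Finite V] (hR : finrank F R = 1)
    (hS : S ∈ relComplements R W) : finrank F S + 1 = finrank F W := by
  obtain ⟨hdisj, rfl⟩ := mem_relComplements.mp hS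
  have h := Submodule.finrank_sup_add_finrank_inf_eq R S
  rw [hdisj.eq_bot, finrank_bot, hR] at h
  omega

theorem eq_inf_of_mem_relComplements [Finite V] (hR : finrank F R = 1)
    (hS : S ∈ relComplements R W) {H : Submodule F V} (hSH : S ≤ H) (hWH : ¬ W ≤ H) :
    S = H ⊓ W := by
  have hSW : S ≤ W := (mem_relComplements.mp hS).2 ▸ le_sup_right
  have hlt : finrank F ↥(H ⊓ W) < finrank F W :=
    Submodule.finrank_lt_finrank_of_lt (inf_le_right.lt_of_ne fun h => hWH (inf_eq_right.mp h))
  have hfin := finrank_add_one_of_mem_relComplements hR hS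
  exact Submodule.eq_of_le_of_finrank_le (le_inf hSH hSW) (by omega)

theorem sum_relComplements_card_filter_le [Finite V] (hR : finrank F R = 1)
    (hW : ∀ H ∈ Bₙ, ¬ W ≤ H) :
    ∑ S ∈ relComplements R W, #{H ∈ Bₙ | S ≤ H} ≤ #{H ∈ Bₙ | ¬ R ≤ H} := by
  rw [← card_biUnion]
  · refine card_le_card fun H hH => ?_
    obtain ⟨S, hS, hSH⟩ : ∃ S ∈ relComplements R W, H ∈ Bₙ ∧ S ≤ H := by simpa using hH
    refine mem_filter.mpr ⟨hSH.1, fun hRH => hW H hSH.1 ?_⟩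
    exact (mem_relComplements.mp hS).2 ▸ sup_le hRH hSH.2
  · intro S hS S' hS' hne
    refine disjoint_filter.mpr fun H hH hSH hSH' => hne ?_
    rw [eq_inf_of_mem_relComplements hR hS hSH (hW H hH),
      eq_inf_of_mem_relComplements hR hS' hSH' (hW H hH)]

/-! ### Counting over a finite field -/

variable [Fintype F]

theorem ncard_submodule [FiniteDimensional F V] (U : Submodule F V) :
    (U : Set V).ncard = q ^ finrank F U := by
  rw [← Nat.card_coe_set_eq, ← Nat.card_eq_fintype_card]
  exact natCard_eq_pow_finrank (K := F) (V := U)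

theorem ncard_submodule_sdiff_add [FiniteDimensional F V] (U T : Submodule F V) :
    ((U : Set V) \ T).ncard + q ^ finrank F ↥(U ⊓ T) = q ^ finrank F U := by
  have := Module.finite_of_finite F (M := V)
  rw [← ncard_submodule, ← ncard_submodule, add_comm, Submodule.coe_inf,
    Set.ncard_inter_add_ncard_sdiff_eq_ncard]

theorem natCard_isCompl [FiniteDimensional F V] (p : Submodule F V) :
    Nat.card {S // IsCompl p S} = q ^ (finrank F (V ⧸ p) * finrank F p) := by
  obtain ⟨f₀, hf₀⟩ := p.subtype.exists_leftInverse_of_injective p.ker_subtype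
  replace hf₀ : ∀ x : p, f₀ x = x := LinearMap.congr_fun hf₀
  -- The projections onto `p` are an affine space over the maps `V ⧸ p → p`.
  let projections : (V ⧸ p →ₗ[F] p) ≃ {f : V →ₗ[F] p // ∀ x : p, f x = x} :=
    { toFun g := ⟨f₀ + g ∘ₗ p.mkQ, fun x => by
        simp [hf₀, (Submodule.Quotient.mk_eq_zero p).mpr x.2]⟩
      invFun f := p.liftQ (f.1 - f₀) fun x hx => by simp [f.2 ⟨x, hx⟩, hf₀ ⟨x, hx⟩]
      left_inv g := by ext; simp
      right_inv f := by ext; simp }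
  rw [Nat.card_congr (p.isComplEquivProj.trans projections.symm),
    natCard_eq_pow_finrank (K := F), finrank_linearMap, Nat.card_eq_fintype_card]

theorem card_relComplements [Finite V] {R W : Submodule F V} (hRW : R ≤ W) :
    #(relComplements R W) = q ^ ((finrank F W - finrank F R) * finrank F R) := by
  let R' : Submodule F W := R.comap W.subtype
  have hfin : finrank F R' = finrank F R := (Submodule.comapSubtypeEquivOfLe hRW).finrank_eq
  have hR' : W.mapIic R' = ⟨R, hRW⟩ := by
    ext1; simpa [R', Submodule.map_comap_subtype] using hRW
  let toIic : {S // IsCompl R' S} ≃ {S : Set.Iic W // IsCompl ⟨R, hRW⟩ S} :=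
    W.mapIic.toEquiv.subtypeEquiv fun S => by rw [W.mapIic.isCompl_iff, hR']; rfl
  let toRelComplements : {S : Set.Iic W // IsCompl ⟨R, hRW⟩ S} ≃ relComplements R W :=
    { toFun S := ⟨S.1, mem_relComplements.mpr (Set.Iic.isCompl_iff.mp S.2)⟩
      invFun S :=
        have hS := mem_relComplements.mp S.2
        ⟨⟨S.1, le_sup_right.trans_eq hS.2⟩, Set.Iic.isCompl_iff.mpr hS⟩ }
  rw [← Nat.card_eq_finsetCard, ← Nat.card_congr (toIic.trans toRelComplements), natCard_isCompl,
    Submodule.finrank_quotient, hfin]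

theorem IsBlockingSet.pow_finrank_le_of_zero [FiniteDimensional F V]
    (hB : IsBlockingSet 0 B₀ Bₙ) (T : Submodule F V) :
    q ^ finrank F V ≤ q ^ finrank F T + #B₀ * (q - 1) + ∑ H ∈ Bₙ, ((H : Set V) \ T).ncard := by
  have := Module.finite_of_finite F (M := V)
  have hcover : (Set.univ : Set V) ⊆
      T ∪ (⋃ p ∈ B₀, (p : Set V) \ (⊥ : Submodule F V)) ∪ ⋃ H ∈ Bₙ, (H : Set V) \ T := by
    intro v _
    by_cases hvT : v ∈ T
    · exact .inl (.inl hvT)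
    have hv : v ≠ 0 := fun h => hvT (h ▸ T.zero_mem)
    have hspan : finrank F (F ∙ v) = 1 := finrank_span_singleton hv
    rcases hB.exists_le_or_exists_ge (F ∙ v) hspan with ⟨p, hp, hpv⟩ | ⟨H, hH, hvH⟩
    · have heq : p = F ∙ v :=
        Submodule.eq_of_le_of_finrank_eq hpv ((hB.finrank_point p hp).trans hspan.symm)
      have hvp : v ∈ p := heq ▸ Submodule.mem_span_singleton_self v
      exact .inl (.inr (Set.mem_biUnion hp ⟨hvp, by simpa using hv⟩))
    · exact .inr (Set.mem_biUnion hH ⟨(Submodule.span_singleton_le_iff_mem v H).mp hvH, hvT⟩)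
  have hpoint : ∀ p ∈ B₀, ((p : Set V) \ (⊥ : Submodule F V)).ncard = q - 1 := fun p hp => by
    have h := ncard_submodule_sdiff_add p ⊥
    rw [inf_bot_eq, finrank_bot, pow_zero, hB.finrank_point p hp, pow_one] at h
    omega
  calc q ^ finrank F V = (Set.univ : Set V).ncard := by
        rw [← finrank_top, ← ncard_submodule, Submodule.top_coe]
    _ ≤ _ := Set.ncard_le_ncard hcover
    _ ≤ _ := Set.ncard_union_le _ _
    _ ≤ _ := Nat.add_le_add (Set.ncard_union_le _ _) (Bₙ.set_ncard_biUnion_le _)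
    _ ≤ q ^ finrank F T + ∑ p ∈ B₀, ((p : Set V) \ (⊥ : Submodule F V)).ncard
        + ∑ H ∈ Bₙ, ((H : Set V) \ T).ncard := by
      rw [ncard_submodule]
      gcongr
      exact B₀.set_ncard_biUnion_le _
    _ = _ := by rw [Finset.sum_congr rfl hpoint, sum_const, smul_eq_mul]

theorem ncard_hyperplane_sdiff_le [FiniteDimensional F V] {H T : Submodule F V}
    (hV : finrank F V = m + 2) (hH : finrank F H = m + 1) (hT : finrank F T = m + 1) :
    ((H : Set V) \ T).ncard ≤ q ^ m * (q - 1) := by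
  have hinf : m ≤ finrank F ↥(H ⊓ T) := by
    have hmod := Submodule.finrank_sup_add_finrank_inf_eq H T
    have hsup := (H ⊔ T).finrank_le
    omega
  have hpow : q ^ m ≤ q ^ finrank F ↥(H ⊓ T) := Nat.pow_le_pow_right Fintype.card_pos hinf
  have hcard := ncard_submodule_sdiff_add H T
  rw [hH, pow_succ] at hcard
  rw [Nat.mul_sub_one]
  omega

theorem IsBlockingSet.le_card_of_zero (hB : IsBlockingSet 0 B₀ Bₙ) (hV : finrank F V = m + 2) :
    q ^ m * (q + 1) ≤ #B₀ + q ^ m * #Bₙ := by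
  have : FiniteDimensional F V := Module.finite_of_finrank_pos (by omega)
  obtain ⟨t, ht, hq⟩ : ∃ t, 0 < t ∧ q = t + 1 :=
    ⟨q - 1, Nat.sub_pos_of_lt Fintype.one_lt_card, (Nat.succ_pred Fintype.card_ne_zero).symm⟩
  refine Nat.le_of_mul_le_mul_left (c := t) ?_ ht
  rcases Bₙ.eq_empty_or_nonempty with rfl | ⟨H₀, hH₀⟩
  · have hcover := hB.pow_finrank_le_of_zero ⊥
    have hpow : 1 ≤ q ^ m := Nat.one_le_pow _ _ Fintype.card_pos
    rw [finrank_bot, hV, sum_empty, pow_add] at hcover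
    simp only [hq, Nat.add_sub_cancel, card_empty] at hcover hpow ⊢
    nlinarith
  · have hfin : ∀ H ∈ Bₙ, finrank F H = m + 1 := fun H hH => by
      have := hB.finrank_hyperplane H hH
      omega
    -- The bound becomes sharp only if the vectors in one hyperplane of `Bₙ` are left aside.
    have hcover := hB.pow_finrank_le_of_zero H₀
    have hsum : ∑ H ∈ Bₙ, ((H : Set V) \ H₀).ncard ≤ #(Bₙ.erase H₀) * (q ^ m * (q - 1)) := by
      rw [← add_sum_erase _ _ hH₀, Set.sdiff_self, Set.ncard_empty, zero_add]
      exact sum_le_card_nsmul _ _ _ fun H hH =>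
        ncard_hyperplane_sdiff_le hV (hfin H (mem_of_mem_erase hH)) (hfin H₀ hH₀)
    rw [hfin H₀ hH₀, hV, pow_add, pow_add] at hcover
    rw [← card_erase_add_one hH₀]
    simp only [hq, Nat.add_sub_cancel] at hcover hsum ⊢
    nlinarith

theorem IsBlockingSet.le_card_projectFrom (hB : IsBlockingSet k B₀ Bₙ)
    (hV : finrank F V = k + m + 2) {S : Submodule F V} (hS : finrank F S = k)
    (hpoints : ∀ p ∈ B₀, ¬ p ≤ S) :
    q ^ m * (q + 1) ≤ #(projectFrom S B₀) + q ^ m * #{H ∈ Bₙ | S ≤ H} := by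
  have : FiniteDimensional F V := Module.finite_of_finrank_pos (by omega)
  have hquot : finrank F (V ⧸ S) = m + 2 := by
    have := S.finrank_quotient_add_finrank
    omega
  have hB' : IsBlockingSet (0 + finrank F S) B₀ Bₙ := by rwa [zero_add, hS]
  exact ((hB'.project hpoints).le_card_of_zero hquot).trans
    (by gcongr; exact card_image_le)

theorem mul_le_card_of_forall_le_card_through [FiniteDimensional F V] [Nontrivial V] {c : ℕ}
    (hₙ : ∀ H ∈ Bₙ, finrank F H + 1 = finrank F V)
    (hthrough : ∀ v : V, v ≠ 0 → c ≤ #{H ∈ Bₙ | v ∈ H}) : q * c ≤ #Bₙ := by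
  have := Module.finite_of_finite F (M := V)
  have := Fintype.ofFinite V
  obtain ⟨d, hd⟩ : ∃ d, finrank F V = d + 1 :=
    Nat.exists_eq_add_of_le' (finrank_pos (R := F) (M := V))
  have hcount : #(univ : Finset V) * c ≤ #Bₙ * q ^ d := by
    refine card_mul_le_card_mul (fun v H => v ∈ H) (fun v _ => ?_) fun H hH => le_of_eq ?_
    · obtain ⟨w, hw⟩ := exists_ne (0 : V)
      rcases eq_or_ne v 0 with rfl | hv
      · refine (hthrough w hw).trans (card_le_card fun H hH => ?_)
        exact mem_filter.mpr ⟨(mem_filter.mp hH).1, H.zero_mem⟩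
      · exact hthrough v hv
    · have hfin : finrank F H = d := by
        have := hₙ H hH
        omega
      rw [← hfin, ← ncard_submodule, ← Set.ncard_coe_finset]
      congr 1
      ext v
      simp [bipartiteBelow]
  rw [card_univ, card_eq_pow_finrank (K := F), hd, pow_succ] at hcount
  refine Nat.le_of_mul_le_mul_left (c := q ^ d) ?_ (pow_pos Fintype.card_pos d)
  rwa [← mul_assoc, mul_comm _ #Bₙ]

theorem IsBlockingSet.le_card_hyperplanes (hB : IsBlockingSet k ∅ Bₙ)
    (hV : finrank F V = k + m + 2) : q ^ k * (q + 1) ≤ #Bₙ := by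
  induction k generalizing V with
  | zero =>
    have h := hB.le_card_of_zero (m := m) (by omega)
    rw [card_empty, zero_add] at h
    simpa using Nat.le_of_mul_le_mul_left h (pow_pos Fintype.card_pos m)
  | succ k ih =>
    have : FiniteDimensional F V := Module.finite_of_finrank_pos (by omega)
    have : Nontrivial V := Module.nontrivial_of_finrank_pos (R := F) (by omega)
    rw [pow_succ', mul_assoc]
    refine mul_le_card_of_forall_le_card_through hB.finrank_hyperplane fun v hv => ?_
    have hv1 : finrank F (F ∙ v) = 1 := finrank_span_singleton hv
    have hquot := (F ∙ v).finrank_quotient_add_finrank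
    rw [← hv1] at hB
    have h := ih (hB.project (by simp)) (by omega)
    simp only [Submodule.span_singleton_le_iff_mem] at h
    exact h.trans card_image_le

/-! ### The lower bound -/

theorem BlockedOnlyBy.card_relComplements [Finite V] (hW : BlockedOnlyBy k B₀ Bₙ R W)
    (hR : finrank F R = 1) : #(relComplements R W) = q ^ k := by
  rw [_root_.card_relComplements hW.le, hW.finrank_eq, hR, Nat.add_sub_cancel, mul_one]

theorem IsBlockingSet.le_sum_card_projectFrom [Finite V] (hB : IsBlockingSet k B₀ Bₙ)
    (hV : finrank F V = k + m + 2) (hW : BlockedOnlyBy k B₀ Bₙ R W) :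
    q ^ (k + m) * (q + 1) ≤
      ∑ S ∈ relComplements R W, #(projectFrom S B₀) + q ^ m * #{H ∈ Bₙ | ¬ R ≤ H} := by
  have hR := hB.finrank_point R hW.mem
  have hquot : ∀ S ∈ relComplements R W,
      q ^ m * (q + 1) ≤ #(projectFrom S B₀) + q ^ m * #{H ∈ Bₙ | S ≤ H} := fun S hS => by
    have hfin := finrank_add_one_of_mem_relComplements hR hS
    rw [hW.finrank_eq, Nat.add_right_cancel_iff] at hfin
    exact hB.le_card_projectFrom hV hfin (hW.not_le_of_mem_relComplements hR hS)
  calc q ^ (k + m) * (q + 1) = #(relComplements R W) • (q ^ m * (q + 1)) := by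
        rw [hW.card_relComplements hR, pow_add, smul_eq_mul, mul_assoc]
    _ ≤ ∑ S ∈ relComplements R W, (#(projectFrom S B₀) + q ^ m * #{H ∈ Bₙ | S ≤ H}) :=
      card_nsmul_le_sum _ _ _ hquot
    _ = ∑ S ∈ relComplements R W, #(projectFrom S B₀)
          + q ^ m * ∑ S ∈ relComplements R W, #{H ∈ Bₙ | S ≤ H} := by
      rw [sum_add_distrib, mul_sum]
    _ ≤ _ := by gcongr; exact sum_relComplements_card_filter_le hR hW.not_le

theorem BlockedOnlyBy.sum_card_projectFrom_le [Finite V] (hW : BlockedOnlyBy k B₀ Bₙ R W)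
    (hR : finrank F R = 1) :
    ∑ S ∈ relComplements R W, #(projectFrom S B₀) ≤ q ^ k * #B₀ := by
  rw [← hW.card_relComplements hR, ← smul_eq_mul]
  exact sum_le_card_nsmul _ _ _ fun S _ => card_image_le

theorem IsBlockingSet.le_of_blockedOnlyBy [Finite V] (hB : IsBlockingSet k B₀ Bₙ)
    (hV : finrank F V = k + m + 2) (hW : BlockedOnlyBy k B₀ Bₙ R W) :
    q ^ (k + m) * (q + 1) ≤ q ^ k * #B₀ + q ^ m * #{H ∈ Bₙ | ¬ R ≤ H} :=
  (hB.le_sum_card_projectFrom hV hW).trans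
    (Nat.add_le_add_right (hW.sum_card_projectFrom_le (hB.finrank_point R hW.mem)) _)

theorem IsBlockingSet.le_weighted_card (hB : IsBlockingSet k B₀ Bₙ)
    (hV : finrank F V = k + m + 2) :
    q ^ (k + m) * (q + 1) ≤ q ^ k * #B₀ + q ^ m * #Bₙ := by
  have : FiniteDimensional F V := Module.finite_of_finrank_pos (by omega)
  have := Module.finite_of_finite F (M := V)
  induction B₀ using Finset.strongInduction with
  | H B₀ ih =>
    rcases B₀.eq_empty_or_nonempty with rfl | ⟨R, hR⟩
    · calc q ^ (k + m) * (q + 1) = q ^ m * (q ^ k * (q + 1)) := by ring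
        _ ≤ q ^ m * #Bₙ := by gcongr; exact hB.le_card_hyperplanes hV
        _ ≤ _ := Nat.le_add_left _ _
    by_cases herase : IsBlockingSet k (B₀.erase R) Bₙ
    · exact (ih _ (erase_ssubset hR) herase).trans (by gcongr; exact erase_subset R B₀)
    · obtain ⟨W, hW⟩ := hB.exists_blockedOnlyBy hR herase
      exact (hB.le_of_blockedOnlyBy hV hW).trans (by gcongr; exact filter_subset _ _)

theorem exists_ge_of_card_filter_lt (hB₀ : ∀ p ∈ B₀, finrank F p = 1)
    (hV : finrank F V = k + m + 2) {U : Submodule F V} (hU : finrank F U ≤ k + 1)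
    (hcard : #{p ∈ B₀ | ¬ p ≤ U} < q ^ m * (q + 1)) :
    ∃ W, U ≤ W ∧ finrank F W = k + 1 ∧ ∀ p ∈ B₀, p ≤ W → p ≤ U := by
  rcases hU.eq_or_lt with hU | hU
  · exact ⟨U, le_rfl, hU, fun _ _ h => h⟩
  have : FiniteDimensional F V := Module.finite_of_finrank_pos (by omega)
  obtain ⟨i, rfl⟩ := Nat.exists_eq_add_of_le' (Nat.le_of_lt_succ hU)
  by_contra! hblock
  have hquot : finrank F (V ⧸ U) = i + m + 2 := by
    have := U.finrank_quotient_add_finrank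
    omega
  have hB : IsBlockingSet i (projectFrom U {p ∈ B₀ | ¬ p ≤ U}) (projectFrom U ∅) := by
    refine isBlockingSet_projectFrom (fun p hp => ?_) (by simp) fun W hUW hW => .inl ?_
    · exact ⟨hB₀ p (mem_filter.mp hp).1, (mem_filter.mp hp).2⟩
    · obtain ⟨p, hp, hpW, hpU⟩ := hblock W hUW (by omega)
      exact ⟨p, mem_filter.mpr ⟨hp, hpU⟩, hpW⟩
  have hbound := hB.le_weighted_card hquot
  rw [projectFrom, projectFrom, image_empty, card_empty, mul_zero, add_zero, pow_add, mul_assoc]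
    at hbound
  have := Nat.le_of_mul_le_mul_left hbound (pow_pos Fintype.card_pos i)
  exact (this.trans card_image_le).not_gt hcard

/-! ### Extremal blocking sets -/

/-- A blocking set with respect to `k`-spaces in projective dimension `k + m + 1` that attains
equality in `IsBlockingSet.le_weighted_card`; for `m = k` the condition is
`|B₀| + |Bₙ| = q ^ k * (q + 1)`. These exist for all `k` and `m`: for `Y ≤ X` of vector-space
dimensions `m + 1` and `m + 2`, take the points of `X` outside `Y` and the hyperplanes that contain
`Y` but not `X`. -/
structure IsExtremalBlockingSet (k m : ℕ) (B₀ Bₙ : Finset (Submodule F V)) : Prop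
    extends IsBlockingSet k B₀ Bₙ where
  finrank_eq : finrank F V = k + m + 2
  weighted_card : q ^ k * #B₀ + q ^ m * #Bₙ = q ^ (k + m) * (q + 1)

namespace IsExtremalBlockingSet

theorem exists_blockedOnlyBy (hB : IsExtremalBlockingSet k m B₀ Bₙ) (hR : R ∈ B₀) :
    ∃ W, BlockedOnlyBy k B₀ Bₙ R W := by
  refine hB.toIsBlockingSet.exists_blockedOnlyBy hR fun herase => ?_
  have hbound := herase.le_weighted_card hB.finrank_eq
  have hlt : q ^ k * #(B₀.erase R) < q ^ k * #B₀ :=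
    Nat.mul_lt_mul_of_pos_left (card_erase_lt_of_mem hR) (pow_pos Fintype.card_pos k)
  have := hB.weighted_card
  omega

variable [Finite V]

theorem point_not_le_hyperplane (hB : IsExtremalBlockingSet k m B₀ Bₙ) (hR : R ∈ B₀) :
    ∀ H ∈ Bₙ, ¬ R ≤ H := by
  obtain ⟨W, hW⟩ := hB.exists_blockedOnlyBy hR
  have hbound := hB.le_of_blockedOnlyBy hB.finrank_eq hW
  rw [← hB.weighted_card, Nat.add_le_add_iff_left] at hbound
  have hcard := Nat.le_of_mul_le_mul_left hbound (pow_pos Fintype.card_pos m)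
  exact card_filter_eq_iff.mp ((card_filter_le _ _).antisymm hcard)

theorem injOn_map_mkQ (hB : IsExtremalBlockingSet k m B₀ Bₙ) (hW : BlockedOnlyBy k B₀ Bₙ R W)
    (hS : S ∈ relComplements R W) : Set.InjOn (Submodule.map S.mkQ) B₀ := by
  have hR := hB.finrank_point R hW.mem
  have hsum : ∑ S ∈ relComplements R W, #(projectFrom S B₀) = ∑ _S ∈ relComplements R W, #B₀ := by
    have hlower := hB.le_sum_card_projectFrom hB.finrank_eq hW
    have hfilter : q ^ m * #{H ∈ Bₙ | ¬ R ≤ H} ≤ q ^ m * #Bₙ := by gcongr; exact filter_subset _ _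
    have hupper := hW.sum_card_projectFrom_le hR
    rw [sum_const, smul_eq_mul, hW.card_relComplements hR]
    have := hB.weighted_card
    omega
  exact card_image_iff.mp ((sum_eq_sum_iff_of_le fun S _ => card_image_le).mp hsum S hS)

theorem exists_blockedOnlyBy_ge (hB : IsExtremalBlockingSet k m B₀ Bₙ) {U : Submodule F V}
    (hU : finrank F U ≤ k + 1) (hR : R ∈ B₀) (hRU : R ≤ U) (hunique : ∀ p ∈ B₀, p ≤ U → p = R) :
    ∃ W, U ≤ W ∧ BlockedOnlyBy k B₀ Bₙ R W := by
  have hcard : #B₀ ≤ q ^ m * (q + 1) := by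
    refine Nat.le_of_mul_le_mul_left (c := q ^ k) ?_ (pow_pos Fintype.card_pos k)
    rw [← mul_assoc, ← pow_add, ← hB.weighted_card]
    exact Nat.le_add_right _ _
  have hfilter : #{p ∈ B₀ | ¬ p ≤ U} < #B₀ :=
    card_lt_card (filter_ssubset.mpr ⟨R, hR, not_not_intro hRU⟩)
  obtain ⟨W, hUW, hW, hWU⟩ := exists_ge_of_card_filter_lt hB.finrank_point hB.finrank_eq hU
    (hfilter.trans_le hcard)
  exact ⟨W, hUW, hW, hR, hRU.trans hUW, fun p hp hpW => hunique p hp (hWU p hp hpW),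
    fun H hH hWH => hB.point_not_le_hyperplane hR H hH ((hRU.trans hUW).trans hWH)⟩

theorem eq_of_le_line (hB : IsExtremalBlockingSet k m B₀ Bₙ) (hW : BlockedOnlyBy k B₀ Bₙ R W)
    {P l : Submodule F V} (hP : finrank F P = 1) (hPB : P ∉ B₀) (hPW : P ≤ W)
    (hl : finrank F l = 2) (hPl : P ≤ l) {p₁ p₂ : Submodule F V} (hp₁ : p₁ ∈ B₀) (hp₁l : p₁ ≤ l)
    (hp₂ : p₂ ∈ B₀) (hp₂l : p₂ ≤ l) : p₁ = p₂ := by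
  have hPatom := Submodule.isAtom_iff_finrank_eq_one.mpr hP
  have hRatom := Submodule.isAtom_iff_finrank_eq_one.mpr (hB.finrank_point R hW.mem)
  have hPR : P ≠ R := fun h => hPB (h ▸ hW.mem)
  obtain ⟨S, hS, hPS⟩ :=
    exists_mem_relComplements_ge hW.le hPW (hPatom.disjoint_of_ne hRatom hPR)
  have hmap : ∀ p ∈ B₀, p ≤ l → p.map S.mkQ = l.map S.mkQ := fun p hp hpl => by
    have hpP : ¬ p ≤ P := fun h =>
      hPB (Submodule.eq_of_le_of_finrank_eq h ((hB.finrank_point p hp).trans hP.symm) ▸ hp)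
    have hline : P ⊔ p = l := by
      refine Submodule.eq_of_le_of_finrank_eq (sup_le hPl hpl) ?_
      rw [finrank_sup_of_finrank_eq_one (hB.finrank_point p hp) hpP, hP, hl]
    have hPzero : P.map S.mkQ = ⊥ := LinearMap.le_ker_iff_map.mp (by rwa [S.ker_mkQ])
    rw [← hline, Submodule.map_sup, hPzero, bot_sup_eq]
  exact hB.injOn_map_mkQ hW hS hp₁ hp₂ ((hmap p₁ hp₁ hp₁l).trans (hmap p₂ hp₂ hp₂l).symm)

end IsExtremalBlockingSet

theorem stmt_12_general (hk : 1 ≤ k) (hV : finrank F V = k + m + 2)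
    (B0 Bn : Set (Submodule F V)) (hB0 : ∀ p ∈ B0, finrank F p = 1)
    (hBn : ∀ H ∈ Bn, finrank F H = k + m + 1)
    (hblock : ∀ W : Submodule F V, finrank F W = k + 1 →
      (∃ p ∈ B0, p ≤ W) ∨ (∃ H ∈ Bn, W ≤ H))
    (hsize : q ^ k * B0.ncard + q ^ m * Bn.ncard = q ^ (k + m) * (q + 1)) :
    ∀ P l₁ l₂ : Submodule F V, finrank F P = 1 → P ∉ B0 →
      finrank F l₁ = 2 → P ≤ l₁ → {p ∈ B0 | p ≤ l₁}.ncard = 1 →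
      finrank F l₂ = 2 → P ≤ l₂ → ¬ 2 ≤ {p ∈ B0 | p ≤ l₂}.ncard := by
  have : FiniteDimensional F V := Module.finite_of_finrank_pos (by omega)
  have := Module.finite_of_finite F (M := V)
  lift B0 to Finset (Submodule F V) using B0.toFinite
  lift Bn to Finset (Submodule F V) using Bn.toFinite
  simp only [Set.ncard_coe_finset] at hsize
  have hB : IsExtremalBlockingSet k m B0 Bn :=
    ⟨⟨hB0, fun H hH => by rw [hBn H hH, hV], hblock⟩, hV, hsize⟩
  intro P l₁ l₂ hP hPB hl₁ hPl₁ htangent hl₂ hPl₂ hsecant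
  obtain ⟨R, hR⟩ := Set.ncard_eq_one.mp htangent
  have hRl₁ : R ∈ B0 ∧ R ≤ l₁ := hR.ge (Set.mem_singleton R)
  have hunique : ∀ p ∈ B0, p ≤ l₁ → p = R := fun p hp hpl₁ =>
    Set.mem_singleton_iff.mp (hR.le ⟨hp, hpl₁⟩)
  obtain ⟨W, hl₁W, hW⟩ := hB.exists_blockedOnlyBy_ge (by omega) hRl₁.1 hRl₁.2 hunique
  obtain ⟨p₁, ⟨hp₁, hp₁l₂⟩, p₂, ⟨hp₂, hp₂l₂⟩, hne⟩ := (Set.one_lt_ncard).mp hsecant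
  exact hne (hB.eq_of_le_line hW hP hPB (hPl₁.trans hl₁W) hl₂ hPl₂ hp₁ hp₁l₂ hp₂ hp₂l₂)

end PointHyperplaneBlockingSets

/-- Let `B = B0 ∪ Bn` be a blocking set of points and hyperplanes
with respect to `k`-spaces in `PG(2k+1,q)` with `|B| = (q+1)·q^k`.  Then no point
`P ∉ B0` lies both on a tangent line to `B0` (a line containing exactly one point of
`B0`) and on a secant line to `B0` (a line containing at least two points of `B0`). -/
theorem stmt_12 {F : Type} [Field F] [Fintype F] (k : ℕ) (hk : 1 ≤ k)
    (B0 Bn : Set (Submodule F (Fin (2 * k + 2) → F)))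
    (hB0 : ∀ p ∈ B0, Module.finrank F p = 1)
    (hBn : ∀ H ∈ Bn, Module.finrank F H = 2 * k + 1)
    (hblock : ∀ W : Submodule F (Fin (2 * k + 2) → F), Module.finrank F W = k + 1 →
      (∃ p ∈ B0, p ≤ W) ∨ (∃ H ∈ Bn, W ≤ H))
    (hsize : B0.ncard + Bn.ncard = (Fintype.card F + 1) * (Fintype.card F) ^ k) :
    ∀ P l₁ l₂ : Submodule F (Fin (2 * k + 2) → F),
      Module.finrank F P = 1 → P ∉ B0 →
      Module.finrank F l₁ = 2 → P ≤ l₁ → {p ∈ B0 | p ≤ l₁}.ncard = 1 →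
      Module.finrank F l₂ = 2 → P ≤ l₂ → ¬ 2 ≤ {p ∈ B0 | p ≤ l₂}.ncard :=
  stmt_12_general (m := k) hk (by rw [Module.finrank_fin_fun]; omega) B0 Bn hB0
    (fun H hH => by rw [hBn H hH]; omega) hblock (by rw [← mul_add, hsize]; ring)
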